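/- Let M be a von Neumann algebra with a faithful normal semifinite trace τ and let α ∈ M^n (n ≥ 1) be a commuting self-adjoint n-tuple. For every τ-finite projection q ∈ M and every ε > 0 there exists a τ-finite projection p ∈ M with p ≥ q and ‖[p, α(j)]‖ ≤ ε for all 1 ≤ j ≤ n. -/

import Mathlib

open ContinuousLinearMap Filter Topology

noncomputable section

namespace VNA

variable {H : Type*} [NormedAddCommGroup H] [InnerProductSpace ℂ H] [CompleteSpace H]

/-- A projection (orthogonal projection): idempotent and self-adjoint. -/
def IsProjection (p : H →L[ℂ] H) : Prop := p * p = p ∧ star p = p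

/-- Murray–von Neumann equivalence of `p` and `q` relative to `M`. -/
def MvNE (M : VonNeumannAlgebra H) (p q : H →L[ℂ] H) : Prop :=
  ∃ v ∈ M, star v * v = p ∧ v * star v = q

/-- `p` is a finite projection of `M`; for projections, `q ≤ p` is the range
containment `p * q = q`. -/
def IsFiniteProjection (M : VonNeumannAlgebra H) (p : H →L[ℂ] H) : Prop :=
  p ∈ M ∧ IsProjection p ∧
    ∀ q, q ∈ M → IsProjection q → p * q = q → MvNE M q p → q = p

def IsInfiniteProjection (M : VonNeumannAlgebra H) (p : H →L[ℂ] H) : Prop :=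
  p ∈ M ∧ IsProjection p ∧ ¬ IsFiniteProjection M p

/-- The centre `Z(M) = M ∩ M'` as a set. -/
def centerSet (M : VonNeumannAlgebra H) : Set (H →L[ℂ] H) :=
  {z | z ∈ M ∧ ∀ y ∈ M, z * y = y * z}

def IsCentralProjection (M : VonNeumannAlgebra H) (z : H →L[ℂ] H) : Prop :=
  IsProjection z ∧ z ∈ centerSet M

def IsProperlyInfiniteProjection (M : VonNeumannAlgebra H) (p : H →L[ℂ] H) : Prop :=
  p ∈ M ∧ IsProjection p ∧
    ∀ z, IsCentralProjection M z → z * p ≠ 0 → IsInfiniteProjection M (z * p)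

def ProperlyInfinite (M : VonNeumannAlgebra H) : Prop :=
  IsProperlyInfiniteProjection M 1

/-- `M` is σ-finite: every family of pairwise orthogonal nonzero projections in `M`
is countable. -/
def SigmaFinite (M : VonNeumannAlgebra H) : Prop :=
  ∀ S : Set (H →L[ℂ] H), (∀ p ∈ S, p ∈ M ∧ IsProjection p ∧ p ≠ 0) →
    (∀ p ∈ S, ∀ q ∈ S, p ≠ q → p * q = 0) → S.Countable

/-- A faithful normal semifinite trace on `M`. -/
structure IsFNSTrace (M : VonNeumannAlgebra H) (τ : (H →L[ℂ] H) → ENNReal) : Prop where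
  map_zero : τ 0 = 0
  additive : ∀ x y : H →L[ℂ] H, x ∈ M → y ∈ M → 0 ≤ x → 0 ≤ y → τ (x + y) = τ x + τ y
  homogeneous : ∀ (c : ℝ) (x : H →L[ℂ] H), 0 ≤ c → x ∈ M → 0 ≤ x →
    τ (c • x) = ENNReal.ofReal c * τ x
  tracial : ∀ x : H →L[ℂ] H, x ∈ M → τ (star x * x) = τ (x * star x)
  faithful : ∀ x : H →L[ℂ] H, x ∈ M → 0 ≤ x → τ x = 0 → x = 0
  normal : ∀ (ι : Type*) [Preorder ι] [IsDirected ι (· ≤ ·)] [Nonempty ι]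
      (f : ι → (H →L[ℂ] H)) (x : H →L[ℂ] H),
      (∀ i, f i ∈ M) → (∀ i, 0 ≤ f i) → Monotone f → (∃ C : ℝ, ∀ i, ‖f i‖ ≤ C) →
      x ∈ M → IsLUB (Set.range f) x → τ x = ⨆ i, τ (f i)
  semifinite : ∀ x : H →L[ℂ] H, x ∈ M → 0 ≤ x → x ≠ 0 →
      ∃ y, y ∈ M ∧ 0 ≤ y ∧ y ≤ x ∧ y ≠ 0 ∧ τ y < ⊤

/-- `p` is a `τ`-finite projection of `M`. -/
def IsTauFiniteProjection (M : VonNeumannAlgebra H) (τ : (H →L[ℂ] H) → ENNReal)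
    (p : H →L[ℂ] H) : Prop :=
  p ∈ M ∧ IsProjection p ∧ τ p < ⊤

/-- `F₁⁺(M) = {x ∈ M : 0 ≤ x ≤ 1, px = x for some τ-finite projection p}`. -/
def F1plus (M : VonNeumannAlgebra H) (τ : (H →L[ℂ] H) → ENNReal) : Set (H →L[ℂ] H) :=
  {x | x ∈ M ∧ 0 ≤ x ∧ x ≤ 1 ∧ ∃ p, IsTauFiniteProjection M τ p ∧ p * x = x}

/-- `K(M,τ)`: operator-norm closure of the τ-finitely supported elements of `M`. -/
def Kideal (M : VonNeumannAlgebra H) (τ : (H →L[ℂ] H) → ENNReal) : Set (H →L[ℂ] H) :=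
  closure {x | x ∈ M ∧ ∃ p, IsTauFiniteProjection M τ p ∧ p * x = x}

/-- A commuting self-adjoint `n`-tuple in `M`. -/
def IsCommutingSelfAdjointTuple (M : VonNeumannAlgebra H) {n : ℕ}
    (α : Fin n → (H →L[ℂ] H)) : Prop :=
  (∀ j, α j ∈ M) ∧ (∀ j, star (α j) = α j) ∧ ∀ i j, α i * α j = α j * α i

/-- `‖[r,α]‖ = max_{1≤j≤n} ‖[r, α(j)]‖`. -/
def commNorm {n : ℕ} (α : Fin n → (H →L[ℂ] H)) (r : H →L[ℂ] H) : ℝ :=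
  ⨆ j, ‖r * α j - α j * r‖

/-- `WZ*(S)`: the double commutant in `B(H)` of `S ∪ Z(M)`. -/
def WZstar (M : VonNeumannAlgebra H) (S : Set (H →L[ℂ] H)) : Set (H →L[ℂ] H) :=
  Set.centralizer (Set.centralizer (S ∪ centerSet M))

/-- A diagonal operator of `M`: `d = Σ_k λ_k p_k` with pairwise orthogonal
projections `p_k ∈ M`, the series converging in the strong operator topology. -/
def IsDiagonal (M : VonNeumannAlgebra H) (d : H →L[ℂ] H) : Prop :=
  ∃ (p : ℕ → H →L[ℂ] H) (lam : ℕ → ℂ),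
    (∀ k, p k ∈ M) ∧ (∀ k, IsProjection (p k)) ∧
    (∀ k l, k ≠ l → p k * p l = 0) ∧
    ∀ ξ : H, HasSum (fun k => lam k • (p k ξ)) (d ξ)

end VNA

open VNA

section helper

variable {H : Type*} [NormedAddCommGroup H] [InnerProductSpace ℂ H] [CompleteSpace H]

/-- Anything commuting with the commutant of `M` is in `M`. -/
lemma mem_of_commutes (M : VonNeumannAlgebra H) (x : H →L[ℂ] H)
    (h : ∀ z ∈ M.commutant, z * x = x * z) : x ∈ M := by
  rw [← M.commutant_commutant]
  exact VonNeumannAlgebra.mem_commutant_iff.2 h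

lemma commutes_of_mem (M : VonNeumannAlgebra H) {x z : H →L[ℂ] H} (hx : x ∈ M)
    (hz : z ∈ M.commutant) : z * x = x * z :=
  (VonNeumannAlgebra.mem_commutant_iff.1 hz x hx).symm

/-- Range projection of a self-adjoint operator. -/
lemma exists_rangeProj (s : H →L[ℂ] H) (hs : star s = s) :
    ∃ r : H →L[ℂ] H, IsProjection r ∧ r * s = s ∧ (∀ z, z * s = 0 → z * r = 0) ∧
      ∀ z, z * s = s * z → z * r = r * z := by
  set U : Submodule ℂ H := (s : H →ₗ[ℂ] H).range.topologicalClosure with hU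
  haveI : CompleteSpace U := by
    exact (Submodule.isClosed_topologicalClosure _).isComplete.completeSpace_coe
  set r := U.starProjection with hr
  have h1 : r * r = r := U.isIdempotentElem_starProjection
  have h2 : star r = r := isSelfAdjoint_starProjection U
  have h3 : r * s = s := by
    ext v
    have : s v ∈ U := Submodule.le_topologicalClosure _ ⟨v, rfl⟩
    exact Submodule.starProjection_eq_self_iff.2 this
  have h4 : ∀ z : H →L[ℂ] H, z * s = 0 → z * r = 0 := by
    intro z hz
    ext v
    have hv : r v ∈ U := Submodule.starProjection_apply_mem U v
    have hle : U ≤ (z : H →ₗ[ℂ] H).ker := by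
      apply Submodule.topologicalClosure_minimal
      · rintro _ ⟨w, rfl⟩
        exact congrArg (fun T : H →L[ℂ] H => T w) hz
      · exact ContinuousLinearMap.isClosed_ker z
    exact hle hv
  have h5 : ∀ z, z * s = s * z → r * z * r = z * r := by
    intro z hz
    have := h4 (z - r * z) (by rw [sub_mul, mul_assoc, hz, ← mul_assoc, h3, sub_self])
    rw [sub_mul, sub_eq_zero] at this
    exact this.symm
  refine ⟨r, ⟨h1, h2⟩, h3, h4, fun z hz => ?_⟩
  have hz' : star z * s = s * star z := by
    have := congrArg star hz
    rw [star_mul, star_mul, hs] at this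
    exact this.symm
  have a := h5 z hz
  have b := congrArg star (h5 _ hz')
  simp only [star_mul, star_star, h2] at b
  rw [← a, mul_assoc, b]

lemma proj_nonneg {p : H →L[ℂ] H} (hp : IsProjection p) : 0 ≤ p := by
  have := star_mul_self_nonneg p
  rwa [hp.2, hp.1] at this

lemma proj_compl {p : H →L[ℂ] H} (hp : IsProjection p) : IsProjection (1 - p) := by
  refine ⟨?_, ?_⟩
  · have := hp.1
    noncomm_ring
    rw [this]; abel
  · rw [star_sub, star_one, hp.2]

/-- Compressing an operator inequality `x ≤ c` by a projection containing `x`. -/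
lemma le_smul_proj {p x : H →L[ℂ] H} (hp : IsProjection p) (hx : p * x * p = x) {c : ℝ}
    (h : x ≤ algebraMap ℝ _ c) : x ≤ c • p := by
  have := IsSelfAdjoint.conjugate_le_conjugate h (c := p) hp.2
  rw [hx] at this
  rwa [Algebra.algebraMap_eq_smul_one, mul_smul_comm, mul_one, smul_mul_assoc, hp.1] at this

lemma norm_le_of_bounds {x : H →L[ℂ] H} (hx : IsSelfAdjoint x) {c : ℝ} (hc : 0 ≤ c)
    (h1 : x ≤ algebraMap ℝ _ c) (h2 : algebraMap ℝ _ (-c) ≤ x) : ‖x‖ ≤ c := by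
  have e1 := (le_algebraMap_iff_spectrum_le (a := x) (r := c) hx).1 h1
  have e2 := (algebraMap_le_iff_le_spectrum (a := x) (r := -c) hx).1 h2
  have : ‖cfc (id : ℝ → ℝ) x‖ ≤ c := by
    apply norm_cfc_le hc
    intro t ht
    rw [id, Real.norm_eq_abs, abs_le]
    exact ⟨e2 t ht, e1 t ht⟩
  rwa [cfc_id ℝ x hx] at this

/-- Halving step. -/
lemma halving (a : H →L[ℂ] H) (ha : star a = a) {c : ℝ} (hc : 0 ≤ c) (hac : ‖a‖ ≤ c) :
    ∃ P : H →L[ℂ] H, IsProjection P ∧ (∀ z, z * a = a * z → z * P = P * z) ∧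
      ‖a - (c • P - (c / 2) • 1)‖ ≤ c / 2 := by
  have hsa : IsSelfAdjoint a := ha
  have hspec : ∀ t ∈ spectrum ℝ a, |t| ≤ c := by
    intro t ht
    have hnt : Nontrivial (H →L[ℂ] H) := by
      by_contra hcon
      rw [not_nontrivial_iff_subsingleton] at hcon
      simp [spectrum.of_subsingleton] at ht
    have := nontrivial_of_ne (0 : H →L[ℂ] H) 1 zero_ne_one
    exact (spectrum.norm_le_norm_of_mem ht).trans hac
  set ap := cfc (fun t : ℝ => max t 0) a with hap
  set am := cfc (fun t : ℝ => max (-t) 0) a with ham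
  have hapsa : star ap = ap := cfc_predicate (R := ℝ) (p := IsSelfAdjoint) _ a
  have hamsa : star am = am := cfc_predicate (R := ℝ) (p := IsSelfAdjoint) _ a
  have hdiff : a = ap - am := by
    rw [hap, ham, ← cfc_sub _ _ a]
    conv_lhs => rw [← cfc_id ℝ a hsa]
    apply cfc_congr
    intro t ht
    rcases le_total t 0 with h | h <;> simp [h]
  have hmul : am * ap = 0 := by
    rw [hap, ham, ← cfc_mul _ _ a]
    rw [← cfc_zero ℝ a]
    apply cfc_congr
    intro t ht
    rcases le_total t 0 with h | h <;> simp [h]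
  have hp0 : 0 ≤ ap := cfc_nonneg fun t _ => le_max_right _ _
  have hm0 : 0 ≤ am := cfc_nonneg fun t _ => le_max_right _ _
  have hpc : ap ≤ algebraMap ℝ _ c := by
    refine cfc_le_algebraMap _ _ _ (fun t ht => ?_) (by fun_prop) hsa
    exact max_le ((le_abs_self t).trans (hspec t ht)) hc
  have hmc : am ≤ algebraMap ℝ _ c := by
    refine cfc_le_algebraMap _ _ _ (fun t ht => ?_) (by fun_prop) hsa
    exact max_le ((neg_le_abs t).trans (hspec t ht)) hc
  obtain ⟨P, hP, hPs, hPk, hPc⟩ := exists_rangeProj ap hapsa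
  have hPs' : ap * P = ap := by
    have := congrArg star hPs
    rwa [star_mul, hapsa, hP.2] at this
  have hk : am * P = 0 := hPk _ hmul
  have hk' : P * am = 0 := by
    have := congrArg star hk
    rwa [star_mul, hamsa, hP.2, star_zero] at this
  have b1 : ap ≤ c • P := le_smul_proj hP (by rw [hPs, hPs']) hpc
  have b2 : am ≤ c • (1 - P) := le_smul_proj (proj_compl hP)
    (by rw [sub_mul, one_mul, hk', sub_zero, mul_sub, mul_one, hk, sub_zero]) hmc
  have e1 : algebraMap ℝ (H →L[ℂ] H) (c/2) = (c/2) • 1 := Algebra.algebraMap_eq_smul_one _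
  have e2 : algebraMap ℝ (H →L[ℂ] H) (-(c/2)) = -((c/2) • 1) := by
    rw [Algebra.algebraMap_eq_smul_one, neg_smul]
  have e3 : c • (1 : H →L[ℂ] H) = (c/2) • 1 + (c/2) • 1 := by rw [← add_smul]; congr 1; ring
  refine ⟨P, hP, fun z hz => hPc z ?_, norm_le_of_bounds ?_ (by positivity) ?_ ?_⟩
  · exact (Commute.cfc_real (a := a) (b := z) hz.symm _).symm
  · have hPsa : IsSelfAdjoint P := hP.2
    refine hsa.sub (IsSelfAdjoint.sub ?_ ?_)
    · exact IsSelfAdjoint.smul (IsSelfAdjoint.all c) hPsa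
    · exact IsSelfAdjoint.smul (IsSelfAdjoint.all _) (IsSelfAdjoint.one _)
  · rw [e1, hdiff, ← sub_nonneg]
    have : 0 ≤ (c • P - ap) + am := add_nonneg (sub_nonneg.2 b1) hm0
    convert this using 1
    abel
  · rw [e2, hdiff, ← sub_nonneg]
    have : 0 ≤ (c • (1 - P) - am) + ap := add_nonneg (sub_nonneg.2 b2) hp0
    convert this using 1
    rw [smul_sub, e3]
    abel

/-- Approximation by elements generated by finitely many projections in the bicommutant. -/
lemma approx (m : ℕ) : ∀ (a : H →L[ℂ] H) (c : ℝ), star a = a → 0 ≤ c → ‖a‖ ≤ c →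
    ∃ (F : List (H →L[ℂ] H)) (d : H →L[ℂ] H),
      (∀ f ∈ F, IsProjection f ∧ ∀ z, z * a = a * z → z * f = f * z) ∧
      (∀ z, (∀ f ∈ F, z * f = f * z) → z * d = d * z) ∧ ‖a - d‖ ≤ c / 2 ^ m := by
  induction m with
  | zero =>
    intro a c ha hc hac
    exact ⟨[], 0, by simp, by simp, by simpa using hac⟩
  | succ m ih =>
    intro a c ha hc hac
    obtain ⟨P, hP, hPc, hPn⟩ := halving a ha hc hac
    set b := c • P - (c / 2) • (1 : H →L[ℂ] H) with hb
    have hcomm : ∀ z, z * P = P * z → z * b = b * z := by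
      intro z hz
      rw [hb, mul_sub, sub_mul, mul_smul_comm, hz, smul_mul_assoc, mul_smul_comm,
        smul_mul_assoc, mul_one, one_mul]
    have hbs : star b = b := by
      rw [hb, star_sub, star_smul, star_smul, hP.2, star_one]; simp
    obtain ⟨F, d, hF, hd, hn⟩ := ih (a - b) (c / 2) (by rw [star_sub, ha, hbs])
      (by positivity) hPn
    refine ⟨P :: F, b + d, ?_, ?_, ?_⟩
    · intro f hf
      rcases List.mem_cons.1 hf with rfl | hf
      · exact ⟨hP, hPc⟩
      · refine ⟨(hF f hf).1, fun z hz => (hF f hf).2 z ?_⟩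
        rw [mul_sub, sub_mul, hz, hcomm z (hPc z hz)]
    · intro z hz
      rw [mul_add, add_mul, hcomm z (hz P (by simp)),
        hd z (fun f hf => hz f (List.mem_cons_of_mem _ hf))]
    · rw [← sub_sub]
      refine hn.trans (le_of_eq ?_)
      rw [pow_succ]; field_simp

/-- The approximate range projections `s (s + δ)⁻¹`. -/
def rp (s : H →L[ℂ] H) (δ : ℝ) : H →L[ℂ] H := cfc (fun t : ℝ => t / (t + δ)) s

lemma contOn_rp {s : H →L[ℂ] H} (hs : 0 ≤ s) {δ : ℝ} (hδ : 0 < δ) :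
    ContinuousOn (fun t : ℝ => t / (t + δ)) (spectrum ℝ s) := by
  apply ContinuousOn.div (by fun_prop) (by fun_prop)
  intro t ht
  have := spectrum_nonneg_of_nonneg hs ht
  positivity

lemma rp_nonneg {s : H →L[ℂ] H} (hs : 0 ≤ s) {δ : ℝ} (hδ : 0 < δ) : 0 ≤ rp s δ := by
  apply cfc_nonneg
  intro t ht
  have := spectrum_nonneg_of_nonneg hs ht
  positivity

lemma rp_le_one {s : H →L[ℂ] H} (hs : 0 ≤ s) {δ : ℝ} (hδ : 0 < δ) : rp s δ ≤ 1 := by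
  apply cfc_le_one
  intro t ht
  have := spectrum_nonneg_of_nonneg hs ht
  rw [div_le_one (by positivity)]
  linarith

lemma rp_anti {s : H →L[ℂ] H} (hs : 0 ≤ s) {δ δ' : ℝ} (hδ : 0 < δ) (h : δ ≤ δ') :
    rp s δ' ≤ rp s δ := by
  apply cfc_mono
  · intro t ht
    have := spectrum_nonneg_of_nonneg hs ht
    beta_reduce
    gcongr
  · exact contOn_rp hs (hδ.trans_le h)
  · exact contOn_rp hs hδ

lemma rp_sandwich {s : H →L[ℂ] H} (hs : 0 ≤ s) {δ : ℝ} (hδ : 0 < δ) :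
    s * s ≤ s * rp s δ * s + δ • s := by
  have hsa : IsSelfAdjoint s := IsSelfAdjoint.of_nonneg hs
  have hid : s = cfc (fun t : ℝ => t) s := (cfc_id' ℝ s hsa).symm
  have hc := contOn_rp hs hδ
  have e1 : s * s = cfc (fun t : ℝ => t * t) s := by
    rw [cfc_mul (fun t : ℝ => t) (fun t => t) s, ← hid]
  have e2 : s * rp s δ * s = cfc (fun t : ℝ => t * (t / (t + δ)) * t) s := by
    rw [cfc_mul (fun t : ℝ => t * (t / (t + δ))) (fun t => t) s
      (continuousOn_id.mul hc) continuousOn_id,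
      cfc_mul (fun t : ℝ => t) (fun t => (t / (t + δ))) s continuousOn_id hc, ← hid, rp]
  have e3 : δ • s = cfc (fun t : ℝ => δ * t) s := by
    rw [cfc_const_mul δ (fun t : ℝ => t) s, ← hid]
  have hc2 : ContinuousOn (fun t : ℝ => t * (t / (t + δ)) * t) (spectrum ℝ s) :=
    (continuousOn_id.mul hc).mul continuousOn_id
  rw [e1, e2, e3, ← cfc_add s (fun t : ℝ => t * (t / (t + δ)) * t) (fun t => δ * t) hc2
    (by fun_prop)]
  apply cfc_mono
  · intro t ht
    have h0 := spectrum_nonneg_of_nonneg hs ht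
    beta_reduce
    have h1 : 0 < t + δ := by positivity
    have : t * (t / (t + δ)) * t + δ * t - t * t = δ ^ 2 * t / (t + δ) := by
      field_simp; ring
    have h2 : 0 ≤ δ ^ 2 * t / (t + δ) := by positivity
    linarith
  · exact continuousOn_id.mul continuousOn_id
  · exact hc2.add (by fun_prop)

lemma rp_factor {s : H →L[ℂ] H} (hs : 0 ≤ s) {δ : ℝ} (hδ : 0 < δ) :
    ∃ g : H →L[ℂ] H, star g = g ∧ (∀ z, z * s = s * z → z * g = g * z) ∧
      g * s * g = rp s δ := by
  have hsa : IsSelfAdjoint s := IsSelfAdjoint.of_nonneg hs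
  have hid : s = cfc (fun t : ℝ => t) s := (cfc_id' ℝ s hsa).symm
  set k : ℝ → ℝ := fun t => (Real.sqrt (t + δ))⁻¹ with hk
  have hkc : ContinuousOn k (spectrum ℝ s) := by
    apply ContinuousOn.inv₀ (by fun_prop)
    intro t ht
    have := spectrum_nonneg_of_nonneg hs ht
    positivity
  refine ⟨cfc k s, cfc_predicate (R := ℝ) (p := IsSelfAdjoint) _ s, fun z hz => ?_, ?_⟩
  · exact (Commute.cfc_real (a := s) (b := z) hz.symm _).symm
  · have : cfc (fun t => k t * t * k t) s = cfc k s * s * cfc k s := by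
      rw [cfc_mul (fun t => k t * t) k s (hkc.mul continuousOn_id) hkc,
        cfc_mul k (fun t => t) s hkc continuousOn_id, ← hid]
    rw [← this, rp]
    apply cfc_congr
    intro t ht
    have h0 := spectrum_nonneg_of_nonneg hs ht
    have h1 : 0 < t + δ := by positivity
    simp only [hk]
    have : Real.sqrt (t + δ) * Real.sqrt (t + δ) = t + δ := Real.mul_self_sqrt h1.le
    have h2 : Real.sqrt (t + δ) ≠ 0 := by positivity
    rw [eq_div_iff h1.ne']
    calc _ = t * ((√(t + δ))⁻¹ * (√(t + δ))⁻¹ * (t + δ)) := by ring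
      _ = t * ((√(t + δ))⁻¹ * (√(t + δ))⁻¹ * (√(t + δ) * √(t + δ))) := by rw [this]
      _ = t := by field_simp

/-- The range projection is an upper bound. -/
lemma rp_le_proj {s r : H →L[ℂ] H} (hs : 0 ≤ s) (hr : IsProjection r) (hrs : r * s = s)
    {δ : ℝ} (hδ : 0 < δ) : r * rp s δ = rp s δ ∧ rp s δ * r = rp s δ ∧ rp s δ ≤ r := by
  have hsa : star s = s := IsSelfAdjoint.of_nonneg hs
  have hsr : s * r = s := by
    have := congrArg star hrs
    rwa [star_mul, hsa, hr.2] at this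
  obtain ⟨g, hg, hgc, hgs⟩ := rp_factor hs hδ
  have hgr := hgc r (by rw [hrs, hsr])
  have a1 : r * rp s δ = rp s δ := by
    rw [← hgs, ← mul_assoc, ← mul_assoc, hgr, mul_assoc g, hrs]
  have a2 : rp s δ * r = rp s δ := by
    rw [← hgs, mul_assoc, ← hgr, ← mul_assoc, mul_assoc g, hsr]
  refine ⟨a1, a2, ?_⟩
  have := le_smul_proj (c := 1) hr (x := rp s δ) (by rw [a1, a2]) (by simpa using rp_le_one hs hδ)
  simpa using this

lemma nonneg_of_dense {x z : H →L[ℂ] H} (hx : star x = x) (hz : star z = z)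
    (hzk : ∀ v, z v = 0 → v = 0) (h : 0 ≤ z * x * z) : 0 ≤ x := by
  have hd : Dense (Set.range z) := by
    have : (z : H →ₗ[ℂ] H).range.topologicalClosure = ⊤ := by
      rw [Submodule.topologicalClosure_eq_top_iff, Submodule.eq_bot_iff]
      intro v hv
      apply hzk
      have h1 := (Submodule.mem_orthogonal _ _).1 hv (z (z v)) ⟨z v, rfl⟩
      have h2 : inner ℂ (z (z v)) v = inner ℂ (z v) (z v) := by
        have := ContinuousLinearMap.adjoint_inner_left z v (z v)
        rw [← ContinuousLinearMap.star_eq_adjoint, hz] at this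
        exact this
      rw [h2] at h1
      exact inner_self_eq_zero.1 h1
    have h3 := Submodule.dense_iff_topologicalClosure_eq_top.2 this
    exact h3
  rw [ContinuousLinearMap.nonneg_iff_isPositive, ContinuousLinearMap.isPositive_def']
  refine ⟨hx, fun v => ?_⟩
  have hcl : IsClosed {v : H | 0 ≤ x.reApplyInnerSelf v} :=
    isClosed_le continuous_const x.reApplyInnerSelf_continuous
  have : ∀ v : H, v ∈ {v : H | 0 ≤ x.reApplyInnerSelf v} := by
    intro v
    refine hcl.closure_subset_iff.2 ?_ (hd v)
    rintro _ ⟨w, rfl⟩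
    have h1 := (((ContinuousLinearMap.nonneg_iff_isPositive _).1 h)).re_inner_nonneg_left w
    have h2 : inner ℂ ((z * x * z) w) w = inner ℂ (x (z w)) (z w) := by
      have := ContinuousLinearMap.adjoint_inner_left z w (x (z w))
      rw [← ContinuousLinearMap.star_eq_adjoint, hz] at this
      exact this
    rw [h2] at h1
    exact h1
  exact this v

/-- least upper bound. -/
lemma proj_le_of_rp_le {s r y : H →L[ℂ] H} (hs : 0 ≤ s) (hr : IsProjection r)
    (hrs : r * s = s) (hrk : ∀ z, z * s = 0 → z * r = 0)
    (hy : ∀ k : ℕ, rp s (1 / ((k : ℝ) + 1)) ≤ y) : r ≤ y := by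
  have hsa : star s = s := IsSelfAdjoint.of_nonneg hs
  have hsr : s * r = s := by
    have := congrArg star hrs
    rwa [star_mul, hsa, hr.2] at this
  have hpos : ∀ k : ℕ, (0 : ℝ) < 1 / ((k : ℝ) + 1) := fun k => by positivity
  have hy0 : 0 ≤ y := (rp_nonneg hs (hpos 0)).trans (hy 0)
  have hysa : star y = y := IsSelfAdjoint.of_nonneg hy0
  set z : H →L[ℂ] H := s + (1 - r) with hz
  have hzsa : star z = z := by
    rw [hz, star_add, star_sub, star_one, hsa, hr.2]
  have hrz : r * z = s := by
    rw [hz, mul_add, mul_sub, mul_one, hr.1, hrs, sub_self, add_zero]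
  have hzr : z * r = s := by
    rw [hz, add_mul, sub_mul, one_mul, hr.1, hsr, sub_self, add_zero]
  rw [← sub_nonneg]
  apply nonneg_of_dense (z := z) (by rw [star_sub, hysa, hr.2]) hzsa
  · intro v hv
    have h1 : s v = 0 := by
      rw [← hrz]
      change r (z v) = 0
      rw [hv, map_zero]
    have h2 : v - r v = 0 := by
      have : z v = s v + (v - r v) := by rw [hz]; simp
      rw [hv, h1, zero_add] at this
      exact this.symm
    -- `r` kills the kernel of `s`
    have h3 : r v = 0 := by
      have hin : ∀ w, inner ℂ (s w) v = 0 := by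
        intro w
        have := ContinuousLinearMap.adjoint_inner_left s v w
        rw [← ContinuousLinearMap.star_eq_adjoint, hsa] at this
        rw [this, h1, inner_zero_right]
      have hT := hrk (InnerProductSpace.rankOne ℂ v v) (by
        ext w
        have : inner ℂ v (s w) = 0 := inner_eq_zero_symm.1 (hin w)
        simp [this])
      have h4 := congrArg (fun T : H →L[ℂ] H => T v) hT
      have h5 : r v = v := (sub_eq_zero.1 h2).symm
      simp [h5] at h4
      simp [h4]
    rw [h3, sub_zero] at h2
    exact h2
  · have key : ∀ k : ℕ, 0 ≤ z * (y - r) * z + (1 / ((k : ℝ) + 1)) • s := by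
      intro k
      obtain ⟨a1, a2, -⟩ := rp_le_proj hs hr hrs (hpos k)
      have b1 := IsSelfAdjoint.conjugate_le_conjugate (hy k) (c := z) hzsa
      have b2 := rp_sandwich hs (hpos k)
      have b3 : z * rp s (1 / ((k : ℝ) + 1)) * z = s * rp s (1 / ((k : ℝ) + 1)) * s := by
        conv_lhs => rw [← a1, ← a2]
        rw [← mul_assoc, hzr, ← mul_assoc, mul_assoc _ r z, hrz]
      have b4 : z * r * z = s * s := by
        rw [hzr]
        conv_lhs => rw [← hsr, mul_assoc, hrz]
      rw [mul_sub, sub_mul, b4]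
      rw [b3] at b1
      have := add_nonneg (sub_nonneg.2 b1) (sub_nonneg.2 b2)
      convert this using 1
      abel
    have hlim : Tendsto (fun k : ℕ => z * (y - r) * z + (1 / ((k : ℝ) + 1)) • s) atTop
        (𝓝 (z * (y - r) * z + (0 : ℝ) • s)) :=
      tendsto_const_nhds.add (tendsto_one_div_add_atTop_nhds_zero_nat.smul_const s)
    rw [zero_smul, add_zero] at hlim
    exact ge_of_tendsto' hlim key

lemma tau_mono {M : VonNeumannAlgebra H} {τ : (H →L[ℂ] H) → ENNReal}
    (hadd : ∀ x y : H →L[ℂ] H, x ∈ M → y ∈ M → 0 ≤ x → 0 ≤ y → τ (x + y) = τ x + τ y)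
    {x y : H →L[ℂ] H} (hx : x ∈ M) (hy : y ∈ M) (h0 : 0 ≤ x) (h : x ≤ y) : τ x ≤ τ y := by
  have := hadd x (y - x) hx (sub_mem hy hx) h0 (sub_nonneg.2 h)
  rw [add_sub_cancel] at this
  rw [this]
  exact le_self_add

/-- range projection of `f q f` is tau-finite. -/
lemma compress {M : VonNeumannAlgebra H} {τ : (H →L[ℂ] H) → ENNReal}
    (hτ : IsFNSTrace M τ) {q f : H →L[ℂ] H} (hq : IsTauFiniteProjection M τ q)
    (hfM : f ∈ M) (hf : IsProjection f) :
    ∃ r, IsTauFiniteProjection M τ r ∧ r * (f * q) = f * q ∧ f * r = r ∧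
      ∀ z, z * q = q * z → z * f = f * z → z * r = r * z := by
  obtain ⟨hqM, hqp, hqf⟩ := hq
  set x := f * q with hx
  have hxM : x ∈ M := mul_mem hfM hqM
  set s := x * star x with hsdef
  have hsM : s ∈ M := mul_mem hxM (star_mem hxM)
  have hs : 0 ≤ s := mul_star_self_nonneg x
  have hsa : star s = s := IsSelfAdjoint.of_nonneg hs
  have hseq : s = f * q * f := by
    rw [hsdef, hx, star_mul, hqp.2, hf.2, mul_assoc, ← mul_assoc q q, hqp.1, mul_assoc]
  have hfs : f * s = s := by rw [hseq, ← mul_assoc, ← mul_assoc, hf.1]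
  obtain ⟨r, hr, hrs, hrk, hrc⟩ := exists_rangeProj s hsa
  have hrM : r ∈ M := mem_of_commutes M r fun z hz => hrc z (commutes_of_mem M hsM hz)
  have hpos : ∀ k : ℕ, (0 : ℝ) < 1 / ((k : ℝ) + 1) := fun k => by positivity
  have hrpM : ∀ k : ℕ, rp s (1 / ((k : ℝ) + 1)) ∈ M := fun k =>
    mem_of_commutes M _ fun z hz =>
      (Commute.cfc_real (a := s) (b := z) (commutes_of_mem M hsM hz).symm _).symm
  have hrpτ : ∀ k : ℕ, τ (rp s (1 / ((k : ℝ) + 1))) ≤ τ q := by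
    intro k
    obtain ⟨g, hg, hgc, hgs⟩ := rp_factor hs (hpos k)
    have hgM : g ∈ M := mem_of_commutes M g fun z hz => hgc z (commutes_of_mem M hsM hz)
    set b := g * x with hb
    have hbM : b ∈ M := mul_mem hgM hxM
    have e1 : b * star b = rp s (1 / ((k : ℝ) + 1)) := by
      rw [← hgs, hb, star_mul, hg, hsdef]; simp only [mul_assoc]
    have hbn : ‖star b * b‖ ≤ 1 := by
      rw [CStarRing.norm_star_mul_self, ← CStarRing.norm_self_mul_star, e1]
      exact (CStarAlgebra.norm_le_one_iff_of_nonneg _ (rp_nonneg hs (hpos k))).2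
        (rp_le_one hs (hpos k))
    have hb1 : star b * b ≤ 1 :=
      (CStarAlgebra.norm_le_one_iff_of_nonneg _ (star_mul_self_nonneg b)).1 hbn
    have hbq : b * q = b := by rw [hb, hx, mul_assoc, mul_assoc, hqp.1]
    have hqb : q * star b = star b := by
      have := congrArg star hbq
      rwa [star_mul, hqp.2] at this
    have hle := le_smul_proj (c := 1) hqp (x := star b * b)
      (by rw [← mul_assoc, hqb, mul_assoc, hbq]) (by simpa using hb1)
    rw [one_smul] at hle
    rw [← e1, ← hτ.tracial b hbM]
    exact tau_mono hτ.additive (mul_mem (star_mem hbM) hbM) hqM (star_mul_self_nonneg b) hle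
  have hlub : IsLUB (Set.range fun k : ULift ℕ => rp s (1 / ((k.down : ℝ) + 1))) r := by
    constructor
    · rintro _ ⟨k, rfl⟩
      exact (rp_le_proj hs hr hrs (hpos _)).2.2
    · intro y hy
      exact proj_le_of_rp_le hs hr hrs hrk fun k => hy ⟨⟨k⟩, rfl⟩
  have hτr : τ r ≤ τ q := by
    rw [hτ.normal (ULift ℕ) (fun k => rp s (1 / ((k.down : ℝ) + 1))) r (fun k => hrpM _)
      (fun k => rp_nonneg hs (hpos _)) ?_ ⟨1, fun k => ?_⟩ hrM hlub]
    · exact iSup_le fun k => hrpτ _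
    · intro k l hkl
      have hkl' : k.down ≤ l.down := hkl
      apply rp_anti hs (hpos _)
      have : (k.down : ℝ) ≤ l.down := by exact_mod_cast hkl'
      gcongr
    · exact (CStarAlgebra.norm_le_one_iff_of_nonneg _ (rp_nonneg hs (hpos _))).2
        (rp_le_one hs (hpos _))
  refine ⟨r, ⟨hrM, hr, hτr.trans_lt hqf⟩, ?_, ?_, ?_⟩
  · have h1 : (x - r * x) * star (x - r * x) = 0 := by
      have : (x - r * x) * star (x - r * x) = (s - r * s) - (s - r * s) * r := by
        rw [star_sub, star_mul r x, hr.2, hsdef]; noncomm_ring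
      rw [this, hrs]; simp
    have h2 := (CStarRing.mul_star_self_eq_zero_iff _).1 h1
    exact (sub_eq_zero.1 h2).symm
  · have := hrk (1 - f) (by rw [sub_mul, one_mul, hfs, sub_self])
    rw [sub_mul, one_mul] at this
    exact (sub_eq_zero.1 this).symm
  · intro z h1 h2
    apply hrc
    rw [hseq, ← mul_assoc, ← mul_assoc, h2, mul_assoc f, h1, ← mul_assoc, mul_assoc _ z, h2,
      ← mul_assoc]

/-- Enlarge a tau-finite projection to commute with a finite commuting list of projections. -/
lemma enlarge {M : VonNeumannAlgebra H} {τ : (H →L[ℂ] H) → ENNReal}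
    (hτ : IsFNSTrace M τ) {q : H →L[ℂ] H} (hq : IsTauFiniteProjection M τ q)
    (F : List (H →L[ℂ] H)) (hF : ∀ f ∈ F, f ∈ M ∧ IsProjection f)
    (hc : ∀ f ∈ F, ∀ g ∈ F, f * g = g * f) :
    ∃ p, IsTauFiniteProjection M τ p ∧ p * q = q ∧ ∀ f ∈ F, p * f = f * p := by
  induction F with
  | nil => exact ⟨q, hq, hq.2.1.1, by simp⟩
  | cons e F ih =>
    obtain ⟨p, hp, hpq, hpF⟩ := ih (fun f hf => hF f (List.mem_cons_of_mem _ hf))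
      (fun f hf g hg => hc f (List.mem_cons_of_mem _ hf) g (List.mem_cons_of_mem _ hg))
    obtain ⟨heM, he⟩ := hF e (by simp)
    obtain ⟨r, hr, hrx, her, hrc⟩ := compress hτ hp heM he
    obtain ⟨t, ht, htx, het, htc⟩ := compress hτ hp (sub_mem (one_mem M) heM) (proj_compl he)
    have hre : r * e = r := by
      have := congrArg star her
      rwa [star_mul, hr.2.1.2, he.2] at this
    have het0 : e * t = 0 := by
      rw [sub_mul, one_mul] at het
      exact sub_eq_self.1 het
    have hte0 : t * e = 0 := by
      have := congrArg star het0
      rwa [star_mul, ht.2.1.2, he.2, star_zero] at this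
    have hrt : r * t = 0 := by rw [← hre, mul_assoc, het0, mul_zero]
    have htr : t * r = 0 := by rw [← her, ← mul_assoc, hte0, zero_mul]
    refine ⟨r + t, ⟨add_mem hr.1 ht.1, ⟨?_, ?_⟩, ?_⟩, ?_, ?_⟩
    · rw [mul_add, add_mul, add_mul, hrt, htr, hr.2.1.1, ht.2.1.1, add_zero, zero_add]
    · rw [star_add, hr.2.1.2, ht.2.1.2]
    · rw [hτ.additive _ _ hr.1 ht.1 (proj_nonneg hr.2.1) (proj_nonneg ht.2.1)]
      exact ENNReal.add_lt_top.2 ⟨hr.2.2, ht.2.2⟩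
    · have hp' : (r + t) * p = p := by
        have e1 : r * p = e * p := by rw [← hrx, ← mul_assoc, hre]
        have ht1 : t * (1 - e) = t := by rw [mul_sub, mul_one, hte0, sub_zero]
        have e2 : t * p = (1 - e) * p := by rw [← htx, ← mul_assoc, ht1]
        rw [add_mul, e1, e2, ← add_mul, add_sub_cancel, one_mul]
      rw [← hpq, ← mul_assoc, hp']
    · intro f hf
      rcases List.mem_cons.1 hf with rfl | hf'
      · rw [add_mul, mul_add, hre, her, het0, hte0]
      · have h1 := hpF f hf'
        have h2 := hc f hf e (by simp)
        rw [add_mul, mul_add, hrc f h1.symm h2, htc f h1.symm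
          (by rw [mul_sub, sub_mul, mul_one, one_mul, h2])]

lemma proj_norm_le_one {p : H →L[ℂ] H} (hp : IsProjection p) : ‖p‖ ≤ 1 := by
  have h : ‖p‖ * ‖p‖ = ‖p‖ := by
    rw [← CStarRing.norm_star_mul_self, hp.2, hp.1]
  nlinarith [norm_nonneg p]

end helper

open VNA in
/-- For every τ-finite projection `q` and `ε > 0` there is a τ-finite
projection `p ≥ q` with `‖[p, α(j)]‖ ≤ ε` for all `j`. -/
theorem statement_4 {H : Type*} [NormedAddCommGroup H] [InnerProductSpace ℂ H]
    [CompleteSpace H] (M : VonNeumannAlgebra H) (τ : (H →L[ℂ] H) → ENNReal)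
    (hτ : IsFNSTrace M τ) (n : ℕ) (hn : 0 < n) (α : Fin n → (H →L[ℂ] H))
    (hα : IsCommutingSelfAdjointTuple M α)
    (q : H →L[ℂ] H) (hq : IsTauFiniteProjection M τ q)
    (ε : ℝ) (hε : 0 < ε) :
    ∃ p, IsTauFiniteProjection M τ p ∧ p * q = q ∧
      ∀ j, ‖p * α j - α j * p‖ ≤ ε := by
  obtain ⟨hαM, hαs, hαc⟩ := hα
  have happ : ∀ j, ∃ (F : List (H →L[ℂ] H)) (d : H →L[ℂ] H),
      (∀ f ∈ F, IsProjection f ∧ ∀ z, z * α j = α j * z → z * f = f * z) ∧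
      (∀ z, (∀ f ∈ F, z * f = f * z) → z * d = d * z) ∧ ‖α j - d‖ ≤ ε / 2 := by
    intro j
    obtain ⟨m, hm⟩ := pow_unbounded_of_one_lt (‖α j‖ / (ε / 2)) (one_lt_two (α := ℝ))
    obtain ⟨F, d, h1, h2, h3⟩ := approx m (α j) ‖α j‖ (hαs j) (norm_nonneg _) le_rfl
    refine ⟨F, d, h1, h2, h3.trans ?_⟩
    rw [div_lt_iff₀ (by positivity)] at hm
    rw [div_le_iff₀ (by positivity)]
    linarith
  choose F d hF hd hn' using happ
  obtain ⟨p, hp, hpq, hpF⟩ := enlarge hτ hq ((List.finRange n).flatMap F) (by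
      intro f hf
      obtain ⟨j, -, hf⟩ := List.mem_flatMap.1 hf
      exact ⟨mem_of_commutes M f fun z hz => (hF j f hf).2 z (commutes_of_mem M (hαM j) hz),
        (hF j f hf).1⟩) (by
      intro f hf g hg
      obtain ⟨j, -, hf⟩ := List.mem_flatMap.1 hf
      obtain ⟨i, -, hg⟩ := List.mem_flatMap.1 hg
      exact (hF i g hg).2 f ((hF j f hf).2 (α i) (hαc i j)).symm)
  refine ⟨p, hp, hpq, fun j => ?_⟩
  have hpd : p * d j = d j * p := hd j p fun f hf =>
    hpF f (List.mem_flatMap.2 ⟨j, List.mem_finRange j, hf⟩)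
  have e : p * α j - α j * p = p * (α j - d j) - (α j - d j) * p := by
    rw [mul_sub, sub_mul, hpd]; abel
  have hp1 := proj_norm_le_one hp.2.1
  rw [e]
  calc _ ≤ ‖p * (α j - d j)‖ + ‖(α j - d j) * p‖ := norm_sub_le _ _
    _ ≤ ‖p‖ * ‖α j - d j‖ + ‖α j - d j‖ * ‖p‖ := add_le_add (norm_mul_le _ _) (norm_mul_le _ _)
    _ ≤ 1 * (ε / 2) + (ε / 2) * 1 := by
      gcongr
      · exact hn' j
      · exact hn' j
    _ = ε := by ring
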